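/- Let x, y, x̃, ỹ ∈ ℝⁿ with first entries ξ₀ ≠ 0 (of x) and ξ̃₀ ≠ 0 (of x̃), let ε > 0 satisfy ‖x̃ − x‖₁ ≤ ε‖x‖₁ and ‖ỹ − y‖₁ ≤ ε‖y‖₁, and set ε̃ = |1/ξ₀ − 1/ξ̃₀| / |1/ξ₀|. Then ‖(1/ξ₀)L_x R_y − (1/ξ̃₀)L_{x̃} R_{ỹ}‖₁ ≤ (1/|ξ₀|)·[ε + (ε + (1+ε)ε̃)(1+ε)]·‖x‖₁·‖y‖₁. -/

import Mathlib

/-! The norm `matNorm1` is submultiplicative, and each column of `Lmat x` or `Rmat y` holds zeros and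
entries at distinct positions of `x` or `y`, so `‖L_x‖₁ ≤ ‖x‖₁` and `‖R_y‖₁ ≤ ‖y‖₁`. With `a = 1/ξ₀`, `b = 1/ξ̃₀`, linearity
of `L` and `R` gives
`a L_x R_y - b L_x̃ R_ỹ = a L_x R_{y-ỹ} + (a L_{x-x̃} + (a-b) L_x̃) R_ỹ`,
and the bound follows from the triangle inequality together with `‖x̃‖₁ ≤ (1+ε)‖x‖₁`,
`‖ỹ‖₁ ≤ (1+ε)‖y‖₁` and `|a-b| = ε̃|a|`. -/

open Matrix

noncomputable section

/-- ℓ¹ norm of a vector. -/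
def vecNorm1 {n : ℕ} (x : Fin n → ℝ) : ℝ := ∑ i, |x i|

/-- ℓ² norm of a vector. -/
def vecNorm2 {n : ℕ} (x : Fin n → ℝ) : ℝ := Real.sqrt (∑ i, (x i) ^ 2)

/-- Matrix operator norm induced by the ℓ¹ vector norm (max absolute column sum). -/
def matNorm1 {n : ℕ} (M : Matrix (Fin n) (Fin n) ℝ) : ℝ := ⨆ j, ∑ i, |M i j|

/-- Matrix operator norm induced by the ℓ∞ vector norm (max absolute row sum). -/
def matNormInf {n : ℕ} (M : Matrix (Fin n) (Fin n) ℝ) : ℝ := ⨆ i, ∑ j, |M i j|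

/-- Spectral norm: operator norm induced by the ℓ² vector norm. -/
def matNorm2 {n : ℕ} (M : Matrix (Fin n) (Fin n) ℝ) : ℝ :=
  ‖Matrix.toEuclideanCLM (𝕜 := ℝ) M‖

/-- The last index of `Fin n`. -/
def lastIdx (n : ℕ) [NeZero n] : Fin n := ⟨n - 1, by have := Nat.pos_of_neZero n; omega⟩

/-- Lower triangular Toeplitz matrix built from `x`. -/
def Lmat {n : ℕ} (x : Fin n → ℝ) : Matrix (Fin n) (Fin n) ℝ :=
  Matrix.of fun i j =>
    if (j : ℕ) ≤ i then x ⟨(i : ℕ) - j, lt_of_le_of_lt (Nat.sub_le _ _) i.isLt⟩ else 0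

/-- Upper triangular Toeplitz matrix built from `y`. -/
def Rmat {n : ℕ} (y : Fin n → ℝ) : Matrix (Fin n) (Fin n) ℝ :=
  Matrix.of fun i j =>
    if (i : ℕ) ≤ j then y ⟨n - 1 - ((j : ℕ) - i), by have := i.isLt; omega⟩ else 0

/-- Strictly lower triangular Toeplitz matrix built from `y`. -/
def L0mat {n : ℕ} (y : Fin n → ℝ) : Matrix (Fin n) (Fin n) ℝ :=
  Matrix.of fun i j =>
    if (j : ℕ) < i then y ⟨(i : ℕ) - j - 1, by have := i.isLt; omega⟩ else 0

/-- Strictly upper triangular Toeplitz matrix built from `x`. -/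
def R0mat {n : ℕ} (x : Fin n → ℝ) : Matrix (Fin n) (Fin n) ℝ :=
  Matrix.of fun i j =>
    if h : (i : ℕ) < j then x ⟨n - ((j : ℕ) - i), by have := j.isLt; omega⟩ else 0

/-- The Gohberg–Semencul expression. -/
def GSF {n : ℕ} [NeZero n] (x y : Fin n → ℝ) : Matrix (Fin n) (Fin n) ℝ :=
  (x 0)⁻¹ • (Lmat x * Rmat y - L0mat y * R0mat x)

/-- `ColBound M c`: every absolute column sum of `M` is at most `c`, that is, `matNorm1 M ≤ c`
(for nonempty index sets). It replaces the supremum in `matNorm1` by pointwise inequalities. -/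
def ColBound {n : ℕ} (M : Matrix (Fin n) (Fin n) ℝ) (c : ℝ) : Prop := ∀ j, ∑ i, |M i j| ≤ c

lemma vecNorm1_nonneg {n : ℕ} (x : Fin n → ℝ) : 0 ≤ vecNorm1 x :=
  Finset.sum_nonneg fun _ _ => abs_nonneg _

lemma vecNorm1_sub_comm {n : ℕ} (x y : Fin n → ℝ) : vecNorm1 (x - y) = vecNorm1 (y - x) := by
  simp only [vecNorm1, Pi.sub_apply, abs_sub_comm]

lemma vecNorm1_le_add {n : ℕ} (x y : Fin n → ℝ) :
    vecNorm1 y ≤ vecNorm1 x + vecNorm1 (y - x) := by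
  simp only [vecNorm1, Pi.sub_apply, ← Finset.sum_add_distrib]
  refine Finset.sum_le_sum fun i _ => ?_
  simpa using abs_add_le (x i) (y i - x i)

lemma ColBound.matNorm1_le {n : ℕ} [NeZero n] {M : Matrix (Fin n) (Fin n) ℝ} {c : ℝ}
    (h : ColBound M c) : matNorm1 M ≤ c := ciSup_le h

lemma ColBound.add {n : ℕ} {M N : Matrix (Fin n) (Fin n) ℝ} {c d : ℝ}
    (hM : ColBound M c) (hN : ColBound N d) : ColBound (M + N) (c + d) := fun j =>
  calc ∑ i, |(M + N) i j| ≤ ∑ i, (|M i j| + |N i j|) :=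
        Finset.sum_le_sum fun _ _ => abs_add_le _ _
    _ ≤ c + d := by rw [Finset.sum_add_distrib]; exact add_le_add (hM j) (hN j)

lemma ColBound.smul {n : ℕ} {M : Matrix (Fin n) (Fin n) ℝ} {c : ℝ} (a : ℝ)
    (hM : ColBound M c) : ColBound (a • M) (|a| * c) := fun j => by
  simp only [Matrix.smul_apply, smul_eq_mul, abs_mul, ← Finset.mul_sum]
  exact mul_le_mul_of_nonneg_left (hM j) (abs_nonneg a)

lemma ColBound.mul {n : ℕ} {M N : Matrix (Fin n) (Fin n) ℝ} {c d : ℝ} (hc : 0 ≤ c)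
    (hM : ColBound M c) (hN : ColBound N d) : ColBound (M * N) (c * d) := fun j =>
  calc ∑ i, |(M * N) i j| ≤ ∑ i, ∑ k, |M i k| * |N k j| :=
        Finset.sum_le_sum fun i _ => by
          rw [Matrix.mul_apply]
          simpa only [abs_mul] using
            Finset.abs_sum_le_sum_abs (fun k => M i k * N k j) Finset.univ
    _ = ∑ k, (∑ i, |M i k|) * |N k j| := by
        rw [Finset.sum_comm]; simp only [Finset.sum_mul]
    _ ≤ ∑ k, c * |N k j| :=
        Finset.sum_le_sum fun k _ => mul_le_mul_of_nonneg_right (hM k) (abs_nonneg _)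
    _ ≤ c * d := by
        rw [← Finset.mul_sum]; exact mul_le_mul_of_nonneg_left (hN j) hc

/-- A finite sum whose nonzero terms are the entries `|x (f i)|`, with `f` injective on the
indices satisfying `p`, is at most `‖x‖₁`. -/
lemma sum_ite_le_vecNorm1 {n : ℕ} (x : Fin n → ℝ) (p : Fin n → Prop) [DecidablePred p]
    (f : Fin n → Fin n) (hf : ∀ i k, p i → p k → f i = f k → i = k) :
    ∑ i, |if p i then x (f i) else 0| ≤ vecNorm1 x := by
  have h : ∀ i, |if p i then x (f i) else 0| = if p i then |x (f i)| else 0 := fun i => by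
    split_ifs <;> simp
  have hinj : Set.InjOn f (Finset.univ.filter p : Finset (Fin n)) := fun i hi k hk => by
    simp only [Finset.coe_filter, Finset.mem_univ, true_and, Set.mem_ofPred_eq] at hi hk
    exact hf i k hi hk
  simp only [h]
  rw [← Finset.sum_filter, ← Finset.sum_image (f := fun m => |x m|) hinj]
  exact Finset.sum_le_sum_of_subset_of_nonneg (Finset.subset_univ _)
    fun _ _ _ => abs_nonneg _

lemma colBound_Lmat {n : ℕ} (x : Fin n → ℝ) : ColBound (Lmat x) (vecNorm1 x) := fun j =>
  sum_ite_le_vecNorm1 x (fun i => (j : ℕ) ≤ i)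
    (fun i => ⟨(i : ℕ) - j, lt_of_le_of_lt (Nat.sub_le _ _) i.isLt⟩) fun i k hi hk h => by
      simp only [Fin.mk.injEq] at h
      omega

lemma colBound_Rmat {n : ℕ} (y : Fin n → ℝ) : ColBound (Rmat y) (vecNorm1 y) := fun j =>
  sum_ite_le_vecNorm1 y (fun i => (i : ℕ) ≤ j)
    (fun i => ⟨n - 1 - ((j : ℕ) - i), by have := i.isLt; omega⟩) fun i k hi hk h => by
      simp only [Fin.mk.injEq] at h
      omega

lemma Lmat_sub {n : ℕ} (x y : Fin n → ℝ) : Lmat (x - y) = Lmat x - Lmat y := by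
  ext i j
  simp only [Lmat, Matrix.of_apply, Matrix.sub_apply, Pi.sub_apply]
  split_ifs <;> simp

lemma Rmat_sub {n : ℕ} (x y : Fin n → ℝ) : Rmat (x - y) = Rmat x - Rmat y := by
  ext i j
  simp only [Rmat, Matrix.of_apply, Matrix.sub_apply, Pi.sub_apply]
  split_ifs <;> simp

/-- 1-norm perturbation bound for the first product in the Gohberg–Semencul formula. -/
theorem gsf_first_product_error_norm1 {n : ℕ} [NeZero n] (x y xt yt : Fin n → ℝ)
    (hx : x 0 ≠ 0) (hxt : xt 0 ≠ 0) (ε : ℝ) (hε : 0 < ε)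
    (h1 : vecNorm1 (xt - x) ≤ ε * vecNorm1 x)
    (h2 : vecNorm1 (yt - y) ≤ ε * vecNorm1 y)
    (εt : ℝ) (hεt : εt = |1 / x 0 - 1 / xt 0| / |1 / x 0|) :
    matNorm1 ((x 0)⁻¹ • (Lmat x * Rmat y) - (xt 0)⁻¹ • (Lmat xt * Rmat yt)) ≤
      1 / |x 0| * (ε + (ε + (1 + ε) * εt) * (1 + ε)) * vecNorm1 x * vecNorm1 y := by
  have hX := vecNorm1_nonneg x
  have hY := vecNorm1_nonneg y
  have hxt' : vecNorm1 xt ≤ (1 + ε) * vecNorm1 x := by linarith [vecNorm1_le_add x xt]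
  have hyt' : vecNorm1 yt ≤ (1 + ε) * vecNorm1 y := by linarith [vecNorm1_le_add y yt]
  have hd : |(x 0)⁻¹ - (xt 0)⁻¹| = |(x 0)⁻¹| * εt := by
    have : |(x 0)⁻¹| ≠ 0 := abs_ne_zero.mpr (inv_ne_zero hx)
    rw [hεt, one_div, one_div]
    field_simp
  have hεt0 : 0 ≤ εt := by rw [hεt]; positivity
  have key : (x 0)⁻¹ • (Lmat x * Rmat y) - (xt 0)⁻¹ • (Lmat xt * Rmat yt) =
      (x 0)⁻¹ • (Lmat x * Rmat (y - yt)) +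
        ((x 0)⁻¹ • Lmat (x - xt) + ((x 0)⁻¹ - (xt 0)⁻¹) • Lmat xt) * Rmat yt := by
    rw [Lmat_sub, Rmat_sub]
    simp only [Matrix.mul_sub, Matrix.add_mul, Matrix.sub_mul, Matrix.smul_mul, smul_sub, sub_smul]
    abel
  have hx' : vecNorm1 (x - xt) ≤ ε * vecNorm1 x := by rwa [vecNorm1_sub_comm]
  have hy' : vecNorm1 (y - yt) ≤ ε * vecNorm1 y := by rwa [vecNorm1_sub_comm]
  rw [key]
  have hxt0 := vecNorm1_nonneg xt
  have hyt0 := vecNorm1_nonneg yt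
  have hxd0 := vecNorm1_nonneg (x - xt)
  refine (((colBound_Lmat x).mul hX (colBound_Rmat (y - yt))).smul _ |>.add
    ((((colBound_Lmat (x - xt)).smul _).add ((colBound_Lmat xt).smul _)).mul (by positivity)
      (colBound_Rmat yt))).matNorm1_le.trans ?_
  rw [hd]
  calc _ ≤ |(x 0)⁻¹| * (vecNorm1 x * (ε * vecNorm1 y)) +
        (|(x 0)⁻¹| * (ε * vecNorm1 x) + |(x 0)⁻¹| * εt * ((1 + ε) * vecNorm1 x)) *
          ((1 + ε) * vecNorm1 y) := by gcongr
    _ = _ := by rw [abs_inv, one_div]; ring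

end
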